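/- arXiv:1811.08946 — 3 statements merged into one kernel-verified Lean document; each statement's English description precedes it below -/
import Mathlib

section
/- Let k be a field, S a totally ordered set, and M a pointwise finite-dimensional indecomposable persistence module over S with M_x ≠ 0 for all x ∈ S. Then the structure map M_x → M_y is surjective for all x ≤ y in S. -/
namespace PMod

variable (k : Type) [Field k]

/-- A persistence module over a preordered set `P` with values in `k`-vector spaces. -/
structure PersistenceModule (P : Type) [Preorder P] where
  V : P → Type
  [addCommGroup : ∀ x, AddCommGroup (V x)]
  [module : ∀ x, Module k (V x)]
  map : ∀ {x y : P}, x ≤ y → (V x →ₗ[k] V y)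
  map_refl : ∀ x : P, map (le_refl x) = LinearMap.id
  map_trans : ∀ {x y z : P} (hxy : x ≤ y) (hyz : y ≤ z),
      map (le_trans hxy hyz) = (map hyz).comp (map hxy)

attribute [instance] PersistenceModule.addCommGroup PersistenceModule.module

variable {k}

/-- A morphism of persistence modules. -/
structure Hom {P : Type} [Preorder P] (M N : PersistenceModule k P) where
  app : ∀ x, M.V x →ₗ[k] N.V x
  natural : ∀ {x y : P} (h : x ≤ y), (N.map h).comp (app x) = (app y).comp (M.map h)

/-- A morphism of persistence modules is an isomorphism iff it is pointwise bijective. -/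
def IsIsoHom {P : Type} [Preorder P] {M N : PersistenceModule k P} (f : Hom M N) : Prop :=
  ∀ x, Function.Bijective (f.app x)

/-- Two persistence modules are isomorphic if there is a pointwise bijective
morphism between them. -/
def Isomorphic {P : Type} [Preorder P] (M N : PersistenceModule k P) : Prop :=
  ∃ f : Hom M N, IsIsoHom f

/-- The direct sum of a family of persistence modules, taken pointwise
(`Π₀` is the finitely supported product, i.e. the direct sum). -/
noncomputable def directSum {P : Type} [Preorder P] {ι : Type}
    (N : ι → PersistenceModule k P) : PersistenceModule k P where
  V x := Π₀ i, (N i).V x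
  map {x y} h := DFinsupp.mapRange.linearMap (fun i => (N i).map h)
  map_refl x := by
    have h : (fun i => (N i).map (le_refl x)) =
        fun i => (LinearMap.id : (N i).V x →ₗ[k] (N i).V x) :=
      funext fun i => (N i).map_refl x
    rw [h]
    exact DFinsupp.mapRange.linearMap_id
  map_trans {x y z} hxy hyz := by
    have h : (fun i => (N i).map (le_trans hxy hyz)) =
        fun i => ((N i).map hyz).comp ((N i).map hxy) :=
      funext fun i => (N i).map_trans hxy hyz
    rw [h]
    exact DFinsupp.mapRange.linearMap_comp _ _

/-- The binary direct sum of two persistence modules, taken pointwise. -/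
def sum2 {P : Type} [Preorder P] (M N : PersistenceModule k P) : PersistenceModule k P where
  V x := M.V x × N.V x
  map h := (M.map h).prodMap (N.map h)
  map_refl x := by
    rw [M.map_refl, N.map_refl]
    exact LinearMap.prodMap_id
  map_trans hxy hyz := by
    rw [M.map_trans hxy hyz, N.map_trans hxy hyz]
    exact (LinearMap.prodMap_comp _ _ _ _).symm

/-- The zero persistence module predicate. -/
def IsZero {P : Type} [Preorder P] (M : PersistenceModule k P) : Prop :=
  ∀ x, ∀ v : M.V x, v = 0

/-- A persistence module is indecomposable if it is nonzero and whenever it is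
isomorphic to a direct sum of two modules, one of the summands is zero. -/
def Indecomposable {P : Type} [Preorder P] (M : PersistenceModule k P) : Prop :=
  ¬ IsZero M ∧ ∀ M' M'' : PersistenceModule k P,
    Isomorphic M (sum2 M' M'') → IsZero M' ∨ IsZero M''

variable (k)

/-- A subset of a preordered set is convex. -/
def IsConvex {P : Type} [Preorder P] (I : Set P) : Prop :=
  ∀ p q r : P, p ≤ q → q ≤ r → p ∈ I → r ∈ I → q ∈ I

open Classical in
/-- The fibre of the interval module `k_I` at `x`: a copy of `k` if `x ∈ I`, else `0`. -/
noncomputable def kMod {P : Type} [Preorder P] (I : Set P) (x : P) : Submodule k k :=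
  if x ∈ I then ⊤ else ⊥

/-- The canonical generator of the fibre of the interval module at a point of `I`. -/
noncomputable def kGen {P : Type} [Preorder P] {I : Set P} {x : P} (hx : x ∈ I) :
    kMod k I x :=
  ⟨1, by simp [kMod, hx]⟩

open Classical in
/-- The structure maps of the interval module. -/
noncomputable def intervalMap {P : Type} [Preorder P] (I : Set P) {x y : P} (_ : x ≤ y) :
    kMod k I x →ₗ[k] kMod k I y where
  toFun m := if hy : y ∈ I then ⟨(m : k), by simp [kMod, hy]⟩ else 0
  map_add' a b := by
    by_cases hy : y ∈ I <;> simp [hy]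
  map_smul' c a := by
    by_cases hy : y ∈ I <;> simp [hy]

theorem kMod_coe_eq_zero {P : Type} [Preorder P] {I : Set P} {x : P} (hx : x ∉ I)
    (m : kMod k I x) : (m : k) = 0 := by
  have hm := m.2
  simp only [kMod, if_neg hx, Submodule.mem_bot] at hm
  exact hm

/-- The interval module `k_I` of a convex subset `I ⊆ P`: one-dimensional with
identity structure maps on `I`, and zero outside of `I`. -/
noncomputable def intervalModule {P : Type} [Preorder P] (I : Set P) (hI : IsConvex I) :
    PersistenceModule k P where
  V x := kMod k I x
  map h := intervalMap k I h
  map_refl x := by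
    ext m
    by_cases hx : x ∈ I
    · simp [intervalMap, hx]
    · simp [intervalMap, hx, kMod_coe_eq_zero k hx m]
  map_trans {x y z} hxy hyz := by
    ext m
    by_cases hz : z ∈ I
    · by_cases hy : y ∈ I
      · simp [intervalMap, hz, hy]
      · have hx : x ∉ I := fun hx => hy (hI x y z hxy hyz hx hz)
        simp [intervalMap, hz, hy, kMod_coe_eq_zero k hx m]
    · by_cases hy : y ∈ I <;> simp [intervalMap, hz, hy]

/-- The constant persistence module `k_P` with value `k` everywhere. -/
def constModule (P : Type) [Preorder P] : PersistenceModule k P where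
  V _ := k
  map _ := LinearMap.id
  map_refl _ := rfl
  map_trans _ _ := rfl

variable {k}

/-- Connectedness of a subset of a preordered set: any two points are joined by
a finite zigzag of comparable points inside the subset. -/
def IsConn {P : Type} [Preorder P] (I : Set P) : Prop :=
  ∀ p ∈ I, ∀ q ∈ I, ∃ (n : ℕ) (r : ℕ → P), r 0 = p ∧ r n = q ∧ (∀ i ≤ n, r i ∈ I) ∧
    ∀ i < n, r i ≤ r (i + 1) ∨ r (i + 1) ≤ r i

/-- An interval in a poset: a nonempty convex connected subset. -/
def IsInterval {P : Type} [Preorder P] (I : Set P) : Prop :=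
  I.Nonempty ∧ IsConvex I ∧ IsConn I

/-- An ideal: a subset closed under going down. -/
def IsIdeal {P : Type} [Preorder P] (I : Set P) : Prop :=
  ∀ p q : P, p ≤ q → q ∈ I → p ∈ I

/-- A filter: a subset closed under going up. -/
def IsFilter {P : Type} [Preorder P] (I : Set P) : Prop :=
  ∀ p q : P, p ≤ q → p ∈ I → q ∈ I

/-- An interval in a totally ordered set: a nonempty convex subset. -/
def IsIntervalLin {P : Type} [Preorder P] (I : Set P) : Prop :=
  I.Nonempty ∧ IsConvex I

theorem IsConvex.prod {S T : Type} [Preorder S] [Preorder T] {A : Set S} {B : Set T}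
    (hA : IsConvex A) (hB : IsConvex B) : IsConvex (A ×ˢ B) := by
  intro p q r hpq hqr hp hr
  exact ⟨hA _ _ _ hpq.1 hqr.1 hp.1 hr.1, hB _ _ _ hpq.2 hqr.2 hp.2 hr.2⟩

theorem isConvex_univ {P : Type} [Preorder P] : IsConvex (Set.univ : Set P) :=
  fun _ _ _ _ _ _ _ => trivial

/-- A block in the product of two totally ordered sets. -/
def IsBlock {S T : Type} [LinearOrder S] [LinearOrder T] (I : Set (S × T)) : Prop :=
  I.Nonempty ∧ (
    (∃ JS JT, IsIntervalLin JS ∧ IsIdeal JS ∧ IsIntervalLin JT ∧ IsIdeal JT ∧ I = JS ×ˢ JT) ∨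
    (∃ JS JT, IsIntervalLin JS ∧ IsFilter JS ∧ IsIntervalLin JT ∧ IsFilter JT ∧ I = JS ×ˢ JT) ∨
    (∃ JS, IsIntervalLin JS ∧ I = JS ×ˢ (Set.univ : Set T)) ∨
    (∃ JT, IsIntervalLin JT ∧ I = (Set.univ : Set S) ×ˢ JT))

theorem IsBlock.isConvex {S T : Type} [LinearOrder S] [LinearOrder T] {I : Set (S × T)}
    (h : IsBlock I) : IsConvex I := by
  obtain ⟨-, h | h | h | h⟩ := h
  · obtain ⟨JS, JT, hS, -, hT, -, rfl⟩ := h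
    exact hS.2.prod hT.2
  · obtain ⟨JS, JT, hS, -, hT, -, rfl⟩ := h
    exact hS.2.prod hT.2
  · obtain ⟨JS, hS, rfl⟩ := h
    exact hS.2.prod isConvex_univ
  · obtain ⟨JT, hT, rfl⟩ := h
    exact isConvex_univ.prod hT.2

/-- Convexity is inherited by preimages in a subposet. -/
theorem IsConvex.preimage {P : Type} [Preorder P] {J : Set P} (hJ : IsConvex J)
    (Q : Set P) : IsConvex {p : Q | (p : P) ∈ J} :=
  fun p q r hpq hqr hp hr => hJ p q r hpq hqr hp hr

/-- The restriction of a persistence module to a subposet. -/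
def restrict {P : Type} [Preorder P] (M : PersistenceModule k P) (Q : Set P) :
    PersistenceModule k Q where
  V q := M.V q
  map h := M.map h
  map_refl q := M.map_refl q
  map_trans hxy hyz := M.map_trans hxy hyz

/-- Middle exactness for persistence modules over a product of two totally ordered sets:
for every rectangle `a = (x,y) ≤ b = (x,y'), c = (x',y) ≤ d = (x',y')` the sequence
`M_a → M_b ⊕ M_c → M_d` is exact at `M_b ⊕ M_c`. -/
def MiddleExact {S T : Type} [Preorder S] [Preorder T]
    (M : PersistenceModule k (S × T)) : Prop :=
  ∀ (x x' : S) (y y' : T) (hx : x ≤ x') (hy : y ≤ y')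
    (mb : M.V (x, y')) (mc : M.V (x', y)),
    M.map (show (x, y') ≤ (x', y') from ⟨hx, le_refl y'⟩) mb =
      M.map (show (x', y) ≤ (x', y') from ⟨le_refl x', hy⟩) mc →
    ∃ ma : M.V (x, y),
      M.map (show (x, y) ≤ (x, y') from ⟨le_refl x, hy⟩) ma = mb ∧
      M.map (show (x, y) ≤ (x', y) from ⟨hx, le_refl y⟩) ma = mc


theorem IsIdeal.isConvex {P : Type} [Preorder P] {I : Set P} (h : IsIdeal I) : IsConvex I :=
  fun _ q r _ hqr _ hr => h q r hqr hr

theorem IsFilter.isConvex {P : Type} [Preorder P] {I : Set P} (h : IsFilter I) : IsConvex I :=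
  fun p q _ hpq _ hp _ => h p q hpq hp


/-- Convexity of the preimage of a convex subset of `T` in a subposet of `S × T`. -/
theorem IsConvex.preimageSnd {S T : Type} [Preorder S] [Preorder T] {J : Set T}
    (hJ : IsConvex J) (Q : Set (S × T)) : IsConvex {p : ↥Q | (p : S × T).2 ∈ J} :=
  fun p q r hpq hqr hp hr =>
    hJ _ _ _ (Subtype.coe_le_coe.mpr hpq).2 (Subtype.coe_le_coe.mpr hqr).2 hp hr

end PMod

/-!
Let `N` be the submodule of `M` that is the image of `M_x` at every `z ≥ x` and all of `M_z`
below `x`. It is enough to show that `N` has a complement: since `N_x = M_x ≠ 0`,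
indecomposability then forces `N = M`, and `N_y = M_y` says that `M_x → M_y` is onto.

Take a submodule `C` maximal among those meeting `N` trivially. By maximality every `v ∉ C_z`
has an image `v_w ∈ N_w + C_w` with `v_w ∉ C_w`. For `z ≥ x` choose, among all `w ≥ z` with
`v_w ∈ N_w + C_w`, one for which the kernel of `N_z → N_w` is minimal, which is possible as `N_z`
is finite-dimensional. Since `N_z → N_w` is onto, `(v - u)_w ∈ C_w` for some `u ∈ N_z`. If `v - u`
were not in `C_z`, the maximality of `C` would give such a `w' < w` with a strictly smaller kernel.
So `v ∈ N_z + C_z`; for `z < x` this is clear because `N_z = M_z`.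
-/

namespace PMod

namespace PersistenceModule

variable {k : Type} [Field k] {P : Type} [Preorder P] {M : PersistenceModule k P}

theorem map_map_apply (M : PersistenceModule k P) {x y z : P} (hxy : x ≤ y) (hyz : y ≤ z)
    (v : M.V x) : M.map hyz (M.map hxy v) = M.map (hxy.trans hyz) v := by
  rw [M.map_trans hxy hyz, LinearMap.comp_apply]

/-- A persistence submodule of `M`, encoded as a pointwise family of subspaces that the structure
maps preserve. Families rather than bundled submodules are used so that the lattice operations,
`Disjoint` and `IsCompl` are those of the product order. -/
def IsSubmodule (M : PersistenceModule k P) (N : ∀ x, Submodule k (M.V x)) : Prop :=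
  ∀ ⦃x y⦄ (h : x ≤ y), (N x).map (M.map h) ≤ N y

namespace IsSubmodule

variable {N C : ∀ x, Submodule k (M.V x)}

theorem map_mem (hN : M.IsSubmodule N) {x y : P} (h : x ≤ y) {v : M.V x} (hv : v ∈ N x) :
    M.map h v ∈ N y :=
  hN h (Submodule.mem_map_of_mem hv)

theorem sup (hN : M.IsSubmodule N) (hC : M.IsSubmodule C) : M.IsSubmodule (N ⊔ C) :=
  fun x y h => by
    rw [Pi.sup_apply, Submodule.map_sup]
    exact sup_le_sup (hN h) (hC h)

theorem sSup {s : Set (∀ x, Submodule k (M.V x))} (hs : ∀ N ∈ s, M.IsSubmodule N) :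
    M.IsSubmodule (sSup s) := fun x y h => by
  rw [sSup_apply, sSup_apply, Submodule.map_iSup]
  exact iSup_mono fun N => hs N N.2 h

/-- A persistence submodule as a persistence module in its own right. -/
def toPersistenceModule (hN : M.IsSubmodule N) : PersistenceModule k P where
  V x := N x
  map h := (M.map h).restrict fun _ => hN.map_mem h
  map_refl x := by ext v; simp [M.map_refl]
  map_trans hxy hyz := by ext v; simp [M.map_trans hxy hyz]

theorem eq_bot_of_isZero (hN : M.IsSubmodule N) (h : IsZero hN.toPersistenceModule) : N = ⊥ :=
  funext fun x => (Submodule.eq_bot_iff _).2 fun v hv => congrArg Subtype.val (h x ⟨v, hv⟩)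

theorem isomorphic_sum2 (hN : M.IsSubmodule N) (hC : M.IsSubmodule C) (h : IsCompl N C) :
    Isomorphic M (sum2 hN.toPersistenceModule hC.toPersistenceModule) := by
  let e x := Submodule.prodEquivOfIsCompl (N x) (C x) (Pi.isCompl_iff.1 h x)
  refine ⟨⟨fun x => ((e x).symm : M.V x →ₗ[k] N x × C x),
    fun {x y} hxy => LinearMap.ext fun v => ?_⟩, fun x => (e x).symm.bijective⟩
  obtain ⟨p, rfl⟩ := (e x).surjective v
  have naturality : M.map hxy (e x p) =
      e y (hN.toPersistenceModule.map hxy p.1, hC.toPersistenceModule.map hxy p.2) :=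
    map_add (M.map hxy) (p.1 : M.V x) p.2
  change (hN.toPersistenceModule.map hxy).prodMap (hC.toPersistenceModule.map hxy)
    ((e x).symm (e x p)) = (e y).symm (M.map hxy (e x p))
  rw [naturality, LinearEquiv.symm_apply_apply, LinearEquiv.symm_apply_apply]
  rfl

end IsSubmodule

/-- The persistence submodule of `M` generated by one element `v ∈ M_z`. The supremum over proofs
of `z ≤ w` makes it vanish at those `w` that are not above `z`. -/
def cyclic (M : PersistenceModule k P) {z : P} (v : M.V z) (w : P) : Submodule k (M.V w) :=
  ⨆ h : z ≤ w, k ∙ M.map h v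

theorem isSubmodule_cyclic (M : PersistenceModule k P) {z : P} (v : M.V z) :
    M.IsSubmodule (M.cyclic v) := fun x y h => by
  simp only [cyclic, Submodule.map_iSup, LinearMap.map_span, Set.image_singleton, map_map_apply]
  exact iSup_le fun hzx => le_iSup_of_le (hzx.trans h) le_rfl

theorem mem_cyclic_self (M : PersistenceModule k P) {z : P} (v : M.V z) : v ∈ M.cyclic v z := by
  simp [cyclic, M.map_refl]

section MaximalDisjoint

variable {N C : ∀ x, Submodule k (M.V x)}

theorem exists_maximal_isSubmodule_disjoint (N : ∀ x, Submodule k (M.V x)) :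
    ∃ C, Maximal (fun C => M.IsSubmodule C ∧ Disjoint N C) C := by
  refine zorn_le₀ {C | M.IsSubmodule C ∧ Disjoint N C} fun c hc hchain =>
    ⟨sSup c, ⟨.sSup fun C hC => (hc hC).1, Pi.disjoint_iff.2 fun x => ?_⟩,
      fun _ => le_sSup⟩
  have hdir : Directed (· ≤ ·) fun C : c => (C : ∀ x, Submodule k (M.V x)) x :=
    hchain.directedOn.directed_val.mono_comp _ fun _ _ h => h x
  rw [sSup_apply, hdir.disjoint_iSup_right]
  exact fun C => Pi.disjoint_iff.1 (hc C.2).2 x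

theorem exists_map_mem_sup_notMem_of_maximal
    (hC : Maximal (fun C => M.IsSubmodule C ∧ Disjoint N C) C) {z : P} {v : M.V z}
    (hv : v ∉ C z) : ∃ (w : P) (h : z ≤ w), M.map h v ∈ N w ⊔ C w ∧ M.map h v ∉ C w := by
  by_contra! hsup
  have hdisj : Disjoint N (C ⊔ M.cyclic v) := Pi.disjoint_iff.2 fun w => by
    have hNC : Disjoint (N w) (C w) := Pi.disjoint_iff.1 hC.prop.2 w
    by_cases hzw : z ≤ w
    · rw [Pi.sup_apply, cyclic, iSup_pos hzw]
      by_cases hmem : M.map hzw v ∈ C w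
      · rwa [sup_eq_left.2 ((Submodule.span_singleton_le_iff_mem _ _).2 hmem)]
      · refine hNC.disjoint_sup_right_of_disjoint_sup_left ?_
        exact Submodule.disjoint_span_singleton.2 fun h => absurd (hsup w hzw h) hmem
    · rwa [Pi.sup_apply, cyclic, iSup_neg hzw, sup_bot_eq]
  have hle : C ⊔ M.cyclic v ≤ C :=
    hC.le_of_ge ⟨hC.prop.1.sup (M.isSubmodule_cyclic v), hdisj⟩ le_sup_left
  exact hv (hle z (Submodule.mem_sup_right (M.mem_cyclic_self v)))

theorem exists_map_sub_mem {z w : P} (h : z ≤ w) (hN : (N z).map (M.map h) = N w) {v : M.V z}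
    (hv : M.map h v ∈ N w ⊔ C w) : ∃ u ∈ N z, M.map h (v - u) ∈ C w := by
  rw [← hN] at hv
  obtain ⟨_, ⟨u, hu, rfl⟩, c, hc, huc⟩ := Submodule.mem_sup.1 hv
  exact ⟨u, hu, by rwa [map_sub, ← huc, add_sub_cancel_left]⟩

theorem codisjoint_of_maximal (hC : Maximal (fun C => M.IsSubmodule C ∧ Disjoint N C) C) {z : P}
    (hz : IsChain (· ≤ ·) (Set.Ici z)) [FiniteDimensional k (N z)]
    (hN : ∀ ⦃w⦄ (h : z ≤ w), (N z).map (M.map h) = N w) : Codisjoint (N z) (C z) := by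
  refine codisjoint_iff_le_sup.2 fun v _ => ?_
  by_cases hvC : v ∈ C z
  · exact Submodule.mem_sup_right hvC
  let K (w : Set.Ici z) : Submodule k (N z) := LinearMap.ker ((M.map w.2).domRestrict (N z))
  obtain ⟨⟨w, hzw⟩, hw, hmin⟩ : ∃ w, MinimalFor
      (fun w : Set.Ici z => M.map w.2 v ∈ N w ⊔ C w) K w := by
    obtain ⟨w, hzw, hw, -⟩ := exists_map_mem_sup_notMem_of_maximal hC hvC
    exact exists_minimalFor_of_wellFoundedLT _ _ ⟨⟨w, hzw⟩, hw⟩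
  obtain ⟨u, hu, huC⟩ := exists_map_sub_mem hzw (hN hzw) hw
  suffices v - u ∈ C z from Submodule.mem_sup.2 ⟨u, hu, v - u, this, add_sub_cancel u v⟩
  by_contra hvu
  obtain ⟨w', hzw', hw', hw'C⟩ := exists_map_mem_sup_notMem_of_maximal hC hvu
  obtain ⟨u', hu', hu'C⟩ := exists_map_sub_mem hzw' (hN hzw') hw'
  have hw'w : w' ≤ w := (hz.total hzw hzw').resolve_left fun hww' =>
    hw'C (M.map_map_apply hzw hww' (v - u) ▸ hC.prop.1.map_mem hww' huC)
  have hu'w : M.map hzw u' = 0 := by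
    refine Submodule.disjoint_def.1 (Pi.disjoint_iff.1 hC.prop.2 w) _
      (hN hzw ▸ Submodule.mem_map_of_mem hu') ?_
    have := hC.prop.1.map_mem hw'w hu'C
    rw [map_map_apply, map_sub] at this
    exact (Submodule.sub_mem_iff_right _ huC).1 this
  have hvw' : M.map hzw' v ∈ N w' ⊔ C w' := by
    rw [← sub_add_cancel v u, map_add]
    exact add_mem hw' (Submodule.mem_sup_left (hN hzw' ▸ Submodule.mem_map_of_mem hu))
  have hK : K ⟨w', hzw'⟩ ≤ K ⟨w, hzw⟩ := fun n (hn : M.map hzw' n = 0) =>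
    show M.map hzw n = 0 by rw [← M.map_map_apply hzw' hw'w, hn, map_zero]
  have hu'w' : M.map hzw' u' = 0 := hmin (j := ⟨w', hzw'⟩) hvw' hK (x := ⟨u', hu'⟩) hu'w
  exact hw'C (by rwa [map_sub, hu'w', sub_zero] at hu'C)

end MaximalDisjoint

/-- The family that is the image of `M_x` at every `z ≥ x` and all of `M_z` at every other `z`:
the infimum over proofs of `x ≤ z` is `⊤` when there are none. -/
def rangeFrom (M : PersistenceModule k P) (x z : P) : Submodule k (M.V z) :=
  ⨅ h : x ≤ z, LinearMap.range (M.map h)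

theorem rangeFrom_of_le (M : PersistenceModule k P) {x z : P} (h : x ≤ z) :
    M.rangeFrom x z = LinearMap.range (M.map h) :=
  iInf_pos h

theorem rangeFrom_self (M : PersistenceModule k P) (x : P) : M.rangeFrom x x = ⊤ := by
  rw [M.rangeFrom_of_le le_rfl, M.map_refl, LinearMap.range_id]

theorem map_rangeFrom (M : PersistenceModule k P) {x z w : P} (hxz : x ≤ z) (hzw : z ≤ w) :
    (M.rangeFrom x z).map (M.map hzw) = M.rangeFrom x w := by
  rw [M.rangeFrom_of_le hxz, M.rangeFrom_of_le (hxz.trans hzw), M.map_trans hxz hzw,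
    LinearMap.range_comp]

theorem isSubmodule_rangeFrom (M : PersistenceModule k P) {x : P} (hx : ∀ z, z ≤ x ∨ x ≤ z) :
    M.IsSubmodule (M.rangeFrom x) := fun z w hzw => by
  rcases hx z with hzx | hxz
  · refine le_iInf fun hxw => ?_
    rw [M.map_trans hzx hxw]
    exact LinearMap.map_le_range.trans (LinearMap.range_comp_le_range _ _)
  · exact (M.map_rangeFrom hxz hzw).le

theorem exists_isCompl_rangeFrom (M : PersistenceModule k P) {x : P}
    [FiniteDimensional k (M.V x)] (hx : IsChain (· ≤ ·) (Set.Ici x)) :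
    ∃ C, M.IsSubmodule C ∧ IsCompl (M.rangeFrom x) C := by
  obtain ⟨C, hC⟩ := exists_maximal_isSubmodule_disjoint (M.rangeFrom x)
  refine ⟨C, hC.prop.1, hC.prop.2, Pi.codisjoint_iff.2 fun z => ?_⟩
  by_cases hxz : x ≤ z
  · have : FiniteDimensional k (M.rangeFrom x z) := by
      rw [M.rangeFrom_of_le hxz]
      infer_instance
    exact codisjoint_of_maximal hC (hx.mono (Set.Ici_subset_Ici.2 hxz))
      fun w => M.map_rangeFrom hxz
  · rw [rangeFrom, iInf_neg hxz]
    exact codisjoint_top_left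

end PersistenceModule

theorem Indecomposable.eq_bot_or_eq_top_of_isCompl {k : Type} [Field k] {P : Type} [Preorder P]
    {M : PersistenceModule k P} (hM : Indecomposable M) {N C : ∀ x, Submodule k (M.V x)}
    (hN : M.IsSubmodule N) (hC : M.IsSubmodule C) (h : IsCompl N C) : N = ⊥ ∨ N = ⊤ :=
  (hM.2 _ _ (hN.isomorphic_sum2 hC h)).imp hN.eq_bot_of_isZero
    fun hzero => eq_top_of_isCompl_bot (hC.eq_bot_of_isZero hzero ▸ h)

end PMod

open PMod in
theorem stmt10_general {k : Type} [Field k] {P : Type} [Preorder P] (M : PersistenceModule k P)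
    (hind : Indecomposable M) {x : P} [FiniteDimensional k (M.V x)]
    (hx : ∀ w, x ≤ w → ∀ z, z ≤ w ∨ w ≤ z) (hne : ∃ v : M.V x, v ≠ 0) {y : P} (h : x ≤ y) :
    Function.Surjective (M.map h) := by
  have hchain : IsChain (· ≤ ·) (Set.Ici x) := fun z _ w hw _ => hx w hw z
  obtain ⟨C, hC, hcompl⟩ := M.exists_isCompl_rangeFrom hchain
  have hN : M.IsSubmodule (M.rangeFrom x) := M.isSubmodule_rangeFrom (hx x le_rfl)
  rcases hind.eq_bot_or_eq_top_of_isCompl hN hC hcompl with hbot | htop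
  · obtain ⟨v, hv⟩ := hne
    have hvbot : v ∈ M.rangeFrom x x := M.rangeFrom_self x ▸ Submodule.mem_top
    rw [hbot] at hvbot
    exact absurd hvbot hv
  · rw [← LinearMap.range_eq_top, ← M.rangeFrom_of_le h, htop, Pi.top_apply]

open PMod in
/-- A pointwise finite-dimensional indecomposable persistence module over a totally
ordered set with full support has surjective structure maps. -/
theorem stmt10 {k : Type} [Field k] {S : Type} [LinearOrder S]
    (M : PersistenceModule k S) (hfd : ∀ x, FiniteDimensional k (M.V x))
    (hind : Indecomposable M) (hne : ∀ x, ∃ v : M.V x, v ≠ 0) :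
    ∀ (x y : S) (h : x ≤ y), Function.Surjective (M.map h) := by
  intro x _ h
  have := hfd x
  exact stmt10_general M hind (fun w _ z => le_total z w) (hne x) h
end

section
/- Let k be a field, S and T totally ordered sets, x ∈ S, y ∈ T, and let H ⊆ S × T be the hook subposet H = ({x} × {t ∈ T : t ≤ y}) ∪ ({s ∈ S : s ≤ x} × {y}). Then every pointwise finite-dimensional indecomposable persistence module M : H → Vec_k is isomorphic to k_I for some interval I ⊆ H. -/
/-!
Splitting off `k_I` from `M` amounts to finding a vector `v q` and a functional `φ q` on `M.V q`
for every `q ∈ I`, compatible with the structure maps and paired to `1`. Starting from one vector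
`v` and one functional `φ` at a single point `p`, push `v` up and pull `φ` back down for free; `v`
has to be lifted along the maps into `p`, and `φ` extended along the maps out of `p`. These two
problems are dual: the extension exists by passing to the direct limit, and the lift is an extension
in the pointwise dual module, where finite dimensionality enters.

On a hook with corner `c`, if some `M.V p → M.V c` is not injective, then `p` lies strictly inside a
leg, and `v` is taken in the smallest nonzero kernel of a map out of `p`, so that the support of the
summand stays away from the corner. Otherwise all maps into `M.V c` are injective and the images
along the two legs form two chains of subspaces of `M.V c`. In both cases `v` and `φ` come from the
fact that two chains of subspaces of a finite-dimensional space admit a common adapted pair.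
-/

section Chains

theorem exists_isLeast_of_isChain {α : Type*} [Preorder α] [WellFoundedLT α] {s : Set α}
    (hs : IsChain (· ≤ ·) s) (hne : s.Nonempty) : ∃ a, IsLeast s a := by
  obtain ⟨a, ha⟩ := exists_minimal_of_wellFoundedLT (· ∈ s) hne
  exact ⟨a, ha.prop, fun b hb => (hs.total ha.prop hb).elim id (ha.le_of_le hb)⟩

theorem isChain_range_of_monotone {α β : Type*} [Preorder α] [Preorder β] {s : Set α}
    (hs : IsChain (· ≤ ·) s) {f : s → β} (hf : Monotone f) : IsChain (· ≤ ·) (Set.range f) := by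
  rintro _ ⟨a, rfl⟩ _ ⟨b, rfl⟩ -
  exact (hs.total a.2 b.2).imp (hf ·) (hf ·)

variable {K V : Type*} [Field K] [AddCommGroup V] [Module K V] [FiniteDimensional K V]

theorem exists_mem_apply_eq_one_of_isChain {G : Set (Submodule K V)} (hG : IsChain (· ≤ ·) G)
    {a : Submodule K V} (ha : a ≠ ⊥) :
    ∃ v ∈ a, ∃ φ : Module.Dual K V, φ v = 1 ∧ ∀ b ∈ G, v ∈ b ∨ b ≤ LinearMap.ker φ := by
  have hchain : IsChain (· ≤ ·) (insert a ((a ⊓ ·) '' G)) := by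
    refine (Monotone.isChain_image (fun _ _ h => inf_le_inf_left a h) hG).insert ?_
    rintro _ ⟨b, -, rfl⟩ -
    exact .inr inf_le_left
  obtain ⟨d, ⟨-, hd⟩, hdle⟩ := exists_isLeast_of_isChain
    (s := {d ∈ insert a ((a ⊓ ·) '' G) | d ≠ ⊥}) (hchain.mono fun d hd => hd.1)
    ⟨a, Set.mem_insert _ _, ha⟩
  obtain ⟨v, hvd, hv⟩ := d.exists_mem_ne_zero_of_ne_bot hd
  have hva : v ∈ a := hdle ⟨Set.mem_insert _ _, ha⟩ hvd
  -- `v` lies in every member of `G` not disjoint from `a`; `φ` kills the union `e` of the others.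
  let e : Submodule K V := sSup {b ∈ G | Disjoint a b}
  have hae : Disjoint a e :=
    (hG.mono fun b hb => hb.1).directedOn.disjoint_sSup_right.2 fun b hb => hb.2
  have hve : v ∉ e := fun h => hv (Submodule.disjoint_def.1 hae v hva h)
  obtain ⟨φ, hφe, hφv⟩ := LinearMap.exists_extend_of_notMem (0 : e →ₗ[K] K) hve 1
  refine ⟨v, hva, φ, hφv, fun b hb => ?_⟩
  by_cases hab : Disjoint a b
  · have hbe : b ≤ e := le_sSup ⟨hb, hab⟩
    exact .inr fun x hx => LinearMap.congr_fun hφe (⟨x, hbe hx⟩ : e)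
  · have hdb : d ≤ a ⊓ b :=
      hdle ⟨.inr ⟨b, hb, rfl⟩, fun h => hab (disjoint_iff.2 h)⟩
    exact .inl (hdb hvd).2

theorem exists_apply_eq_one_of_isChain_of_isChain {F G : Set (Submodule K V)}
    (hF : IsChain (· ≤ ·) F) (hG : IsChain (· ≤ ·) G) (hne : ∃ a ∈ F, a ≠ ⊥) :
    ∃ (v : V) (φ : Module.Dual K V), φ v = 1 ∧ (∀ a ∈ F, a = ⊥ ∨ v ∈ a) ∧
      ∀ b ∈ G, v ∈ b ∨ b ≤ LinearMap.ker φ := by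
  obtain ⟨a, ⟨-, ha⟩, hle⟩ :=
    exists_isLeast_of_isChain (s := {a ∈ F | a ≠ ⊥}) (hF.mono fun a ha => ha.1) hne
  obtain ⟨v, hva, φ, hφv, hφ⟩ := exists_mem_apply_eq_one_of_isChain hG ha
  exact ⟨v, φ, hφv, fun b hb => or_iff_not_imp_left.2 fun hb0 => hle ⟨hb, hb0⟩ hva, hφ⟩

end Chains

namespace PMod

open OrderDual

variable {k : Type} [Field k] {P : Type} [Preorder P] {M N : PersistenceModule k P}

namespace PersistenceModule

variable (M)

theorem map_map {p q r : P} (hpq : p ≤ q) (hqr : q ≤ r) (m : M.V p) :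
    M.map hqr (M.map hpq m) = M.map (hpq.trans hqr) m := by
  rw [M.map_trans hpq hqr, LinearMap.comp_apply]

theorem map_self {p : P} (h : p ≤ p) (m : M.V p) : M.map h m = m := by
  rw [M.map_refl, LinearMap.id_apply]

theorem map_injective_of_le_of_le {p q : P} (hpq : p ≤ q) (hqp : q ≤ p) :
    Function.Injective (M.map hpq) :=
  Function.LeftInverse.injective (g := M.map hqp) fun m => by rw [M.map_map, M.map_self]

theorem monotone_range_map (p : P) :
    Monotone fun q : Set.Iic p => LinearMap.range (M.map q.2) := by
  rintro ⟨q, hq⟩ ⟨r, hr⟩ hqr _ ⟨m, rfl⟩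
  exact ⟨M.map hqr m, M.map_map hqr hr m⟩

theorem monotone_ker_map (p : P) :
    Monotone fun q : Set.Ici p => LinearMap.ker (M.map q.2) := by
  rintro ⟨q, hq⟩ ⟨r, hr⟩ hqr m hm
  rw [LinearMap.mem_ker] at hm ⊢
  rw [← M.map_map hq hqr, hm, map_zero]

end PersistenceModule

/-- The pointwise dual of a persistence module, as a module over the opposite preorder. It turns
lifting problems for vectors into extension problems for functionals. -/
def dual (M : PersistenceModule k P) : PersistenceModule k Pᵒᵈ where
  V q := Module.Dual k (M.V (ofDual q))
  map h := (M.map (ofDual_le_ofDual.2 h)).dualMap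
  map_refl q := by rw [M.map_refl, LinearMap.dualMap_id]
  map_trans hpq hqr := by
    rw [M.map_trans (ofDual_le_ofDual.2 hqr) (ofDual_le_ofDual.2 hpq),
      LinearMap.dualMap_comp_dualMap]

section Retracts

theorem Hom.map_app (f : Hom M N) {p q : P} (h : p ≤ q) (m : M.V p) :
    N.map h (f.app p m) = f.app q (M.map h m) :=
  LinearMap.congr_fun (f.natural h) m

/-- The pointwise kernel of a morphism of persistence modules, used as a complement to a retract. -/
def Hom.ker (f : Hom M N) : PersistenceModule k P where
  V q := LinearMap.ker (f.app q)
  map h := (M.map h).restrict fun m hm => by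
    rw [LinearMap.mem_ker] at hm ⊢
    rw [← f.map_app h, hm, map_zero]
  map_refl q := by
    ext m
    simp only [LinearMap.coe_restrict_apply, M.map_self, LinearMap.id_apply]
  map_trans hpq hqr := by
    ext m
    simp only [LinearMap.coe_restrict_apply, LinearMap.comp_apply, M.map_map]

theorem isomorphic_sum2_ker {i : Hom N M} {r : Hom M N}
    (hri : ∀ q, Function.LeftInverse (r.app q) (i.app q)) : Isomorphic M (sum2 N r.ker) := by
  have hmem (q : P) (m : M.V q) : m - i.app q (r.app q m) ∈ LinearMap.ker (r.app q) := by
    rw [LinearMap.mem_ker, map_sub, hri q, sub_self]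
  let f : Hom M (sum2 N r.ker) :=
    { app q := (r.app q).prod
        ((LinearMap.id - i.app q ∘ₗ r.app q).codRestrict (LinearMap.ker (r.app q)) (hmem q))
      natural {p q} h := by
        refine LinearMap.ext fun m => Prod.ext (r.map_app h m) (Subtype.ext ?_)
        change M.map h (m - i.app p (r.app p m)) = M.map h m - i.app q (r.app q (M.map h m))
        rw [map_sub, i.map_app, r.map_app] }
  refine ⟨f, fun q => ⟨(injective_iff_map_eq_zero _).2 fun m hm => ?_, ?_⟩⟩
  · have hr : r.app q m = 0 := congrArg Prod.fst hm
    have hi : m - i.app q (r.app q m) = 0 := congrArg (fun z => (Prod.snd z).1) hm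
    rwa [hr, map_zero, sub_zero] at hi
  · rintro ⟨n, x, hx⟩
    have hr : r.app q (i.app q n + x) = n := by
      rw [map_add, hri q, LinearMap.mem_ker.1 hx, add_zero]
    refine ⟨i.app q n + x, Prod.ext hr (Subtype.ext ?_)⟩
    change i.app q n + x - i.app q (r.app q (i.app q n + x)) = x
    rw [hr, add_sub_cancel_left]

theorem Indecomposable.isIsoHom_of_leftInverse (hM : Indecomposable M) (hN : ¬ IsZero N)
    {i : Hom N M} {r : Hom M N} (hri : ∀ q, Function.LeftInverse (r.app q) (i.app q)) :
    IsIsoHom r := fun q => by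
  have hker : IsZero r.ker := (hM.2 _ _ (isomorphic_sum2_ker hri)).resolve_left hN
  exact ⟨(injective_iff_map_eq_zero _).2 fun m hm => congrArg Subtype.val (hker q ⟨m, hm⟩),
    (hri q).surjective⟩

end Retracts

section Sections

/-- `v` restricts to a section of `M` over `Q`: its values on `Q` are compatible with the structure
maps, and its values outside `Q` are irrelevant. -/
def IsSectionOn (M : PersistenceModule k P) (Q : Set P) (v : ∀ q, M.V q) : Prop :=
  ∀ ⦃s t⦄ (h : s ≤ t), s ∈ Q → t ∈ Q → M.map h (v s) = v t

/-- The families of vectors corresponding to morphisms `k_I → M`. For the dual of `M`, they are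
families of functionals and correspond to morphisms `M → k_I`. -/
structure IsSupportedSection (M : PersistenceModule k P) (I : Set P) (v : ∀ q, M.V q) : Prop where
  map_eq : ∀ ⦃s t⦄ (h : s ≤ t), s ∈ I → M.map h (v s) = v t
  eq_zero : ∀ ⦃q⦄, q ∉ I → v q = 0

variable {I : Set P}

/-- The morphism `k_I → M` which sends `1` to `v q` at each `q ∈ I`. -/
noncomputable def IsSupportedSection.homFromInterval {v : ∀ q, M.V q}
    (hv : IsSupportedSection M I v) (hI : IsConvex I) : Hom (intervalModule k I hI) M where
  app q := (kMod k I q).subtype.smulRight (v q)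
  natural {s t} h := by
    refine LinearMap.ext fun (c : kMod k I s) => ?_
    change M.map h ((c : k) • v s) = (intervalMap k I h c : k) • v t
    by_cases hs : s ∈ I
    · rw [map_smul, hv.map_eq h hs]
      by_cases ht : t ∈ I
      · simp only [intervalMap, dif_pos ht, LinearMap.coe_mk, AddHom.coe_mk]
      · rw [hv.eq_zero ht, smul_zero, smul_zero]
    · obtain rfl : c = 0 := Subtype.ext (kMod_coe_eq_zero k hs c)
      simp only [ZeroMemClass.coe_zero, zero_smul, map_zero]

/-- The morphism `M → k_I` given by the functional `φ q` at each `q ∈ I`. -/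
noncomputable def IsSupportedSection.homToInterval {φ : ∀ q, Module.Dual k (M.V q)}
    (hφ : IsSupportedSection (dual M) (ofDual ⁻¹' I) fun q => φ (ofDual q)) (hI : IsConvex I) :
    Hom M (intervalModule k I hI) where
  app q := (φ q).codRestrict (kMod k I q) fun m => by
    by_cases hq : q ∈ I
    · simp only [kMod, if_pos hq, Submodule.mem_top]
    · rw [show φ q = 0 from hφ.eq_zero (q := toDual q) hq]
      exact Submodule.zero_mem _
  natural {s t} h := by
    refine LinearMap.ext fun m => ?_
    by_cases ht : t ∈ I
    · have hst : φ t (M.map h m) = φ s m :=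
        LinearMap.congr_fun (hφ.map_eq (toDual_le_toDual.2 h) ht) m
      exact (dif_pos ht).trans (Subtype.ext hst.symm)
    · have hφt : φ t = 0 := hφ.eq_zero (q := toDual t) ht
      exact (dif_neg ht).trans (Subtype.ext (LinearMap.congr_fun hφt (M.map h m)).symm)

theorem IsSupportedSection.apply_eq_apply {v : ∀ q, M.V q} {φ : ∀ q, Module.Dual k (M.V q)}
    (hv : IsSupportedSection M I v)
    (hφ : IsSupportedSection (dual M) (ofDual ⁻¹' I) fun q => φ (ofDual q)) {s t : P}
    (h : s ≤ t) (hs : s ∈ I) (ht : t ∈ I) : φ s (v s) = φ t (v t) := by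
  rw [← hv.map_eq h hs]
  exact (LinearMap.congr_fun (hφ.map_eq (toDual_le_toDual.2 h) ht) (v s)).symm

theorem isConn_of_forall_le_or_le {p : P} (hp : p ∈ I) (hcomp : ∀ q ∈ I, q ≤ p ∨ p ≤ q) :
    IsConn I := by
  intro a ha b hb
  refine ⟨2, fun i => if i = 0 then a else if i = 1 then p else b, rfl, rfl, fun i _ => ?_, ?_⟩
  · dsimp only
    split_ifs <;> assumption
  · intro i hi
    interval_cases i
    · exact hcomp a ha
    · exact (hcomp b hb).symm

theorem not_isZero_intervalModule (hI : IsConvex I) (hne : I.Nonempty) :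
    ¬ IsZero (intervalModule k I hI) := fun h =>
  one_ne_zero (congrArg Subtype.val (h hne.some (kGen k hne.some_mem)))

theorem Indecomposable.isomorphic_intervalModule_of_isSupportedSection (hM : Indecomposable M)
    (hI : IsConvex I) {p : P} (hp : p ∈ I) (hcomp : ∀ q ∈ I, q ≤ p ∨ p ≤ q)
    {v : ∀ q, M.V q} (hv : IsSupportedSection M I v)
    {φ : ∀ q, Module.Dual k (M.V q)}
    (hφ : IsSupportedSection (dual M) (ofDual ⁻¹' I) fun q => φ (ofDual q))
    (hφv : φ p (v p) = 1) :
    ∃ hI : IsInterval I, Isomorphic M (intervalModule k I hI.2.1) := by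
  have hone (q : P) (hq : q ∈ I) : φ q (v q) = 1 := by
    rcases hcomp q hq with h | h
    · rw [hv.apply_eq_apply hφ h hq hp, hφv]
    · rw [← hv.apply_eq_apply hφ h hp hq, hφv]
  refine ⟨⟨⟨p, hp⟩, hI, isConn_of_forall_le_or_le hp hcomp⟩, hφ.homToInterval hI,
    hM.isIsoHom_of_leftInverse (not_isZero_intervalModule hI ⟨p, hp⟩)
      (i := hv.homFromInterval hI) fun q (c : kMod k I q) => Subtype.ext ?_⟩
  change φ q ((c : k) • v q) = c
  by_cases hq : q ∈ I
  · rw [map_smul, hone q hq, smul_eq_mul, mul_one]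
  · rw [kMod_coe_eq_zero k hq c, zero_smul, map_zero]

theorem exists_isSupportedSection (hI : IsConvex I) {p : P} (hp : p ∈ I)
    (hcomp : ∀ s ∈ I, ∀ t, s ≤ t → t ≤ p ∨ p ≤ t) {w : ∀ q, M.V q}
    (hw : IsSectionOn M (I ∩ Set.Iic p) w)
    (hzero : ∀ q ∉ I, ∀ h : p ≤ q, M.map h (w p) = 0) :
    ∃ v, IsSupportedSection M I v ∧ v p = w p := by
  classical
  let v : ∀ q, M.V q := fun q => if h : p ≤ q then M.map h (w p) else if q ∈ I then w q else 0
  have v_of_ge {q : P} (h : p ≤ q) : v q = M.map h (w p) := dif_pos h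
  have v_of_le {q : P} (hq : q ∈ I) (h : q ≤ p) : v q = w q := by
    by_cases h' : p ≤ q
    · rw [v_of_ge h', hw h' ⟨hp, le_rfl⟩ ⟨hq, h⟩]
    · simp only [v, dif_neg h', if_pos hq]
  refine ⟨v, ⟨fun s t h hs => ?_, fun q hq => ?_⟩, v_of_le hp le_rfl⟩
  · rcases hcomp s hs s le_rfl with hsp | hps
    · rw [v_of_le hs hsp]
      rcases hcomp s hs t h with htp | hpt
      · have ht : t ∈ I := hI s t p h htp hs hp
        rw [v_of_le ht htp, hw h ⟨hs, hsp⟩ ⟨ht, htp⟩]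
      · rw [v_of_ge hpt, ← hw hsp ⟨hs, hsp⟩ ⟨hp, le_rfl⟩, M.map_map]
    · rw [v_of_ge hps, v_of_ge (hps.trans h), M.map_map]
  · by_cases h : p ≤ q
    · rw [v_of_ge h, hzero q hq h]
    · simp only [v, dif_neg h, if_neg hq]

end Sections

section Extension

variable {Q : Set P} {p : P}

theorem exists_isSectionOn_dual (M : PersistenceModule k P) (hQ : DirectedOn (· ≤ ·) Q)
    (hp : p ∈ Q) (φ : Module.Dual k (M.V p))
    (hφ : ∀ q ∈ Q, ∀ h : p ≤ q, φ ∈ LinearMap.range (M.map h).dualMap) :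
    ∃ ψ : ∀ q, Module.Dual k (M.V q),
      IsSectionOn (dual M) (ofDual ⁻¹' Q) (fun q => ψ (ofDual q)) ∧ ψ p = φ := by
  classical
  let f (i j : Q) (h : i ≤ j) : M.V i →ₗ[k] M.V j := M.map h
  have : IsDirectedOrder Q := ⟨directedOn_iff_directed.1 hQ⟩
  have : DirectedSystem (fun i : Q => M.V i) (f · · ·) :=
    { map_self := fun _ m => M.map_self _ m
      map_map := fun _ _ _ hij hjl m => M.map_map hij hjl m }
  let ι (q : Q) : M.V q →ₗ[k] Module.DirectLimit (fun i : Q => M.V i) f :=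
    Module.DirectLimit.of k Q (fun i : Q => M.V i) f q
  have hφι : φ ∈ LinearMap.range (ι ⟨p, hp⟩).dualMap := by
    rw [LinearMap.range_dualMap_eq_dualAnnihilator_ker, Submodule.mem_dualAnnihilator]
    intro m hm
    obtain ⟨⟨q, hq⟩, h, hqm⟩ := Module.DirectLimit.of.zero_exact (LinearMap.mem_ker.1 hm)
    obtain ⟨χ, rfl⟩ := hφ q hq h
    rw [LinearMap.dualMap_apply, show M.map _ m = 0 from hqm, map_zero]
  obtain ⟨Ψ, rfl⟩ := hφι
  let ψ (q : P) : Module.Dual k (M.V q) :=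
    if hq : q ∈ Q then (ι ⟨q, hq⟩).dualMap Ψ else 0
  have ψ_eq {q : P} (hq : q ∈ Q) : ψ q = (ι ⟨q, hq⟩).dualMap Ψ := dif_pos hq
  refine ⟨ψ, fun s t h (hs : ofDual s ∈ Q) (ht : ofDual t ∈ Q) => ?_, ψ_eq hp⟩
  change (M.map (ofDual_le_ofDual.2 h)).dualMap (ψ (ofDual s)) = ψ (ofDual t)
  rw [ψ_eq hs, ψ_eq ht]
  exact LinearMap.ext fun m => congrArg Ψ
    (Module.DirectLimit.of_f (f := f) (i := ⟨ofDual t, ht⟩) (j := ⟨ofDual s, hs⟩) (hij := h))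

theorem exists_isSectionOn [∀ q, FiniteDimensional k (M.V q)] (hQ : DirectedOn (· ≥ ·) Q)
    (hp : p ∈ Q) (v : M.V p) (hv : ∀ q ∈ Q, ∀ h : q ≤ p, v ∈ LinearMap.range (M.map h)) :
    ∃ w, IsSectionOn M Q w ∧ w p = v := by
  obtain ⟨ψ, hψ, hψp⟩ := exists_isSectionOn_dual (dual M) (Q := ofDual ⁻¹' Q) (p := toDual p)
    hQ hp (Module.Dual.eval k (M.V p) v) fun q hq h => by
      obtain ⟨u, rfl⟩ := hv (ofDual q) hq h
      exact ⟨Module.Dual.eval k _ u, rfl⟩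
  let e (q : P) := Module.evalEquiv k (M.V q)
  choose w hw using fun q => (e q).surjective (ψ (toDual q))
  refine ⟨w, fun s t h hs ht => (e t).injective ?_, (e p).injective ((hw p).trans hψp)⟩
  rw [hw t]
  refine Eq.trans ?_ (hψ (s := toDual (toDual s)) (t := toDual (toDual t)) h hs ht)
  exact LinearMap.ext fun χ => LinearMap.congr_fun (hw s) (χ ∘ₗ M.map h)

theorem exists_isSectionOn_of_injective (hQ : Q ⊆ Set.Iic p) (hp : p ∈ Q)
    (hinj : ∀ q (h : q ≤ p), Function.Injective (M.map h)) (v : M.V p)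
    (hv : ∀ q ∈ Q, ∀ h : q ≤ p, v ∈ LinearMap.range (M.map h)) :
    ∃ w, IsSectionOn M Q w ∧ w p = v := by
  have hlift (q : P) (hq : q ∈ Q) : ∃ u, ∀ h : q ≤ p, M.map h u = v :=
    (hv q hq (hQ hq)).imp fun _ hu _ => hu
  choose! w hw using hlift
  refine ⟨w, fun s t h hs ht => ?_, ?_⟩
  · have htp : t ≤ p := hQ ht
    exact hinj t htp (by rw [M.map_map, hw s hs, hw t ht])
  · rw [← hw p hp le_rfl, M.map_self]

end Extension

section AdaptedPairs

variable {p : P}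

/-- A vector and a functional at `p`, normalised and adapted to all the images and kernels of the
structure maps at `p`. The two conditions are dual to each other. -/
structure IsAdapted (M : PersistenceModule k P) (v : M.V p) (φ : Module.Dual k (M.V p)) :
    Prop where
  apply_eq_one : φ v = 1
  mem_range_or : ∀ ⦃q⦄ (h : q ≤ p), v ∈ LinearMap.range (M.map h) ∨ (M.map h).dualMap φ = 0
  mem_range_dualMap_or : ∀ ⦃q⦄ (h : p ≤ q), φ ∈ LinearMap.range (M.map h).dualMap ∨ M.map h v = 0

/-- The points below `p` to which `v` lifts, and the points above `p` to which `φ` extends: the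
support of the interval module generated by an adapted pair. -/
def support (M : PersistenceModule k P) (v : M.V p) (φ : Module.Dual k (M.V p)) : Set P :=
  {q | (∃ h : q ≤ p, v ∈ LinearMap.range (M.map h)) ∨
    ∃ h : p ≤ q, φ ∈ LinearMap.range (M.map h).dualMap}

variable {v : M.V p} {φ : Module.Dual k (M.V p)} {q : P}

theorem mem_support_iff_of_le (h : q ≤ p) :
    q ∈ support M v φ ↔ v ∈ LinearMap.range (M.map h) := by
  refine ⟨?_, fun hv => .inl ⟨h, hv⟩⟩
  rintro (⟨_, hv⟩ | ⟨h', _⟩)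
  · exact hv
  · exact ⟨M.map h' v, by rw [M.map_map, M.map_self]⟩

theorem mem_support_iff_of_ge (h : p ≤ q) :
    q ∈ support M v φ ↔ φ ∈ LinearMap.range (M.map h).dualMap := by
  refine ⟨?_, fun hφ => .inr ⟨h, hφ⟩⟩
  rintro (⟨h', _⟩ | ⟨_, hφ⟩)
  · exact LinearMap.dualMap_surjective_of_injective (M.map_injective_of_le_of_le h h') φ
  · exact hφ

theorem self_mem_support : p ∈ support M v φ :=
  (mem_support_iff_of_le le_rfl).2 ⟨v, M.map_self _ v⟩

theorem isConvex_support
    (hcomp : ∀ s ∈ support M v φ, ∀ t, s ≤ t → t ≤ p ∨ p ≤ t) : IsConvex (support M v φ) := by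
  intro a b c hab hbc ha hc
  rcases hcomp a ha b hab with hbp | hpb
  · rw [mem_support_iff_of_le hbp]
    rw [mem_support_iff_of_le (hab.trans hbp)] at ha
    exact M.monotone_range_map p (a := ⟨a, hab.trans hbp⟩) (b := ⟨b, hbp⟩) hab ha
  · rw [mem_support_iff_of_ge hpb]
    rw [mem_support_iff_of_ge (hpb.trans hbc)] at hc
    obtain ⟨χ, rfl⟩ := hc
    exact ⟨(M.map hbc).dualMap χ, LinearMap.ext fun m => congrArg χ (M.map_map hpb hbc m)⟩

theorem Indecomposable.isomorphic_intervalModule_of_isAdapted (hM : Indecomposable M)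
    (hvφ : IsAdapted M v φ)
    (hcomp : ∀ s ∈ support M v φ, ∀ t, s ≤ t ∨ t ≤ s → t ≤ p ∨ p ≤ t)
    (hchain : IsChain (· ≤ ·) (Set.Ici p))
    (hlift : ∃ w, IsSectionOn M (support M v φ ∩ Set.Iic p) w ∧ w p = v) :
    ∃ hI : IsInterval (support M v φ), Isomorphic M (intervalModule k (support M v φ) hI.2.1) := by
  have hconvex := isConvex_support fun s hs t h => hcomp s hs t (.inl h)
  obtain ⟨w, hw, rfl⟩ := hlift
  obtain ⟨ψ, hψ, rfl⟩ := exists_isSectionOn_dual M (Q := support M (w p) φ ∩ Set.Ici p)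
    (hchain.mono Set.inter_subset_right).directedOn ⟨self_mem_support, le_rfl⟩ φ
    fun q hq h => (mem_support_iff_of_ge h).1 hq.1
  obtain ⟨v', hv', hv'p⟩ := exists_isSupportedSection hconvex self_mem_support
    (fun s hs t h => hcomp s hs t (.inl h)) hw fun q hq h =>
      (hvφ.mem_range_dualMap_or h).resolve_left fun hr => hq ((mem_support_iff_of_ge h).2 hr)
  obtain ⟨φ', hφ', hφ'p⟩ := exists_isSupportedSection (M := dual M) (p := toDual p)
    (I := ofDual ⁻¹' support M (w p) (ψ p))
    (fun a b c hab hbc ha hc => hconvex c b a hbc hab hc ha) (self_mem_support (M := M))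
    (fun s hs t h => (hcomp s hs t (.inr h)).symm) hψ fun q hq (h : ofDual q ≤ p) =>
      (hvφ.mem_range_or h).resolve_left fun hr => hq ((mem_support_iff_of_le h).2 hr)
  refine hM.isomorphic_intervalModule_of_isSupportedSection hconvex self_mem_support
    (fun q hq => hcomp q hq q (.inl le_rfl)) hv' (φ := fun q => φ' (toDual q)) hφ' ?_
  rw [show φ' (toDual p) = ψ p from hφ'p, hv'p, hvφ.apply_eq_one]

end AdaptedPairs

section Hooks

theorem Indecomposable.exists_isomorphic_of_not_injective (hM : Indecomposable M)
    [∀ q, FiniteDimensional k (M.V q)] {c : P} (hc : IsTop c)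
    (hIci : ∀ q : P, IsChain (· ≤ ·) (Set.Ici q))
    (hIic : ∀ q : P, ¬ c ≤ q → IsChain (· ≤ ·) (Set.Iic q))
    {p : P} (hp : ¬ Function.Injective (M.map (hc p))) :
    ∃ (I : Set P) (hI : IsInterval I), Isomorphic M (intervalModule k I hI.2.1) := by
  have hcp : ¬ c ≤ p := fun h => hp (M.map_injective_of_le_of_le (hc p) h)
  obtain ⟨v, φ, hφv, hker, hrange⟩ := exists_apply_eq_one_of_isChain_of_isChain
    (isChain_range_of_monotone (hIci p) (M.monotone_ker_map p))
    (isChain_range_of_monotone (hIic p hcp) (M.monotone_range_map p))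
    ⟨_, ⟨⟨c, hc p⟩, rfl⟩, fun h => hp (LinearMap.ker_eq_bot.1 h)⟩
  have hvφ : IsAdapted M v φ :=
    { apply_eq_one := hφv
      mem_range_or := fun q h => (hrange _ ⟨⟨q, h⟩, rfl⟩).imp_right fun hle =>
        LinearMap.ext fun m => hle ⟨m, rfl⟩
      mem_range_dualMap_or := fun q h => (hker _ ⟨⟨q, h⟩, rfl⟩).imp_left fun hbot =>
        LinearMap.dualMap_surjective_of_injective (LinearMap.ker_eq_bot.1 hbot) φ }
  have hvc : M.map (hc p) v = 0 := (hker _ ⟨⟨c, hc p⟩, rfl⟩).resolve_left fun h =>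
    hp (LinearMap.ker_eq_bot.1 h)
  have hnot_ge {q : P} (hpq : p ≤ q) (hq : q ∈ support M v φ) : ¬ c ≤ q := by
    intro hcq
    obtain ⟨χ, rfl⟩ := (mem_support_iff_of_ge hpq).1 hq
    rw [LinearMap.dualMap_apply, ← M.map_map (hc p) hcq, hvc, map_zero, map_zero] at hφv
    exact zero_ne_one hφv
  refine ⟨_, hM.isomorphic_intervalModule_of_isAdapted hvφ ?_ (hIci p) ?_⟩
  · rintro s hs t (hst | hts)
    · rcases hs with ⟨hsp, -⟩ | ⟨hps, -⟩
      · exact (hIci s).total hst hsp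
      · exact .inr (hps.trans hst)
    · by_cases hps : p ≤ s
      · exact (hIic s (hnot_ge hps hs)).total hts hps
      · exact .inl (hts.trans (hs.resolve_right fun h => hps h.1).1)
  · have hchain : IsChain (· ≥ ·) (Set.Iic p) := (hIic p hcp).symm
    exact exists_isSectionOn (hchain.mono Set.inter_subset_right).directedOn
      ⟨self_mem_support, le_rfl⟩ v fun q hq h => (mem_support_iff_of_le h).1 hq.1

theorem Indecomposable.exists_isomorphic_of_injective (hM : Indecomposable M) {c : P}
    [FiniteDimensional k (M.V c)] (hc : IsTop c) {A B : Set P} (hAB : A ∪ B = Set.univ)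
    (hcA : c ∈ A) (hA : IsChain (· ≤ ·) A) (hB : IsChain (· ≤ ·) B)
    (hinj : ∀ q, Function.Injective (M.map (hc q))) :
    ∃ (I : Set P) (hI : IsInterval I), Isomorphic M (intervalModule k I hI.2.1) := by
  have hmono (L : Set P) : Monotone fun q : L => LinearMap.range (M.map (hc q)) := fun q r h =>
    M.monotone_range_map c (a := ⟨q, hc q⟩) (b := ⟨r, hc r⟩) h
  have hne : LinearMap.range (M.map (hc c)) ≠ ⊥ := fun hbot => hM.1 fun q m => by
    refine (injective_iff_map_eq_zero _).1 (hinj q) m ?_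
    rw [← M.map_map (hc q) (hc c), LinearMap.range_eq_bot.1 hbot, LinearMap.zero_apply]
  obtain ⟨v, φ, hφv, hvA, hvB⟩ := exists_apply_eq_one_of_isChain_of_isChain
    (isChain_range_of_monotone hA (hmono A)) (isChain_range_of_monotone hB (hmono B))
    ⟨_, ⟨⟨c, hcA⟩, rfl⟩, hne⟩
  have hvφ : IsAdapted M v φ :=
    { apply_eq_one := hφv
      mem_range_or := fun q h => by
        rcases hAB.ge (Set.mem_univ q) with hq | hq
        · refine (hvA _ ⟨⟨q, hq⟩, rfl⟩).symm.imp_right fun hbot => ?_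
          rw [LinearMap.range_eq_bot.1 hbot, LinearMap.dualMap_apply', LinearMap.comp_zero]
        · exact (hvB _ ⟨⟨q, hq⟩, rfl⟩).imp_right fun hle => LinearMap.ext fun m => hle ⟨m, rfl⟩
      mem_range_dualMap_or := fun q h => .inl <|
        LinearMap.dualMap_surjective_of_injective (M.map_injective_of_le_of_le h (hc q)) φ }
  exact ⟨_, hM.isomorphic_intervalModule_of_isAdapted hvφ (fun _ _ t _ => .inl (hc t))
    (fun q _ r hr _ => .inl ((hc q).trans hr))
    (exists_isSectionOn_of_injective Set.inter_subset_right ⟨self_mem_support, le_rfl⟩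
      (fun q _ => hinj q) v fun q hq h => (mem_support_iff_of_le h).1 hq.1)⟩

/-- A hook with corner `c` and legs `A` and `B`: two chains, both closed upwards, which meet exactly
in the top elements. -/
structure IsHook (c : P) (A B : Set P) : Prop where
  isTop : IsTop c
  union_eq : A ∪ B = Set.univ
  inter_eq : A ∩ B = Set.Ici c
  isUpperSet_left : IsUpperSet A
  isUpperSet_right : IsUpperSet B
  isChain_left : IsChain (· ≤ ·) A
  isChain_right : IsChain (· ≤ ·) B

namespace IsHook

variable {c q : P} {A B : Set P}

theorem mem_left_or_mem_right (h : IsHook c A B) (q : P) : q ∈ A ∨ q ∈ B :=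
  h.union_eq.ge (Set.mem_univ q)

theorem corner_mem_left (h : IsHook c A B) : c ∈ A :=
  (h.inter_eq.ge Set.self_mem_Ici).1

theorem isChain_Ici (h : IsHook c A B) (q : P) : IsChain (· ≤ ·) (Set.Ici q) := by
  rcases h.mem_left_or_mem_right q with hq | hq
  · exact h.isChain_left.mono fun r hr => h.isUpperSet_left hr hq
  · exact h.isChain_right.mono fun r hr => h.isUpperSet_right hr hq

theorem isChain_Iic (h : IsHook c A B) (hq : ¬ c ≤ q) : IsChain (· ≤ ·) (Set.Iic q) := by
  have hinter (hA : q ∈ A) (hB : q ∈ B) : False := hq (h.inter_eq.le ⟨hA, hB⟩)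
  rcases h.mem_left_or_mem_right q with hqA | hqB
  · exact h.isChain_left.mono fun r hr => (h.mem_left_or_mem_right r).resolve_right
      fun hrB => hinter hqA (h.isUpperSet_right hr hrB)
  · exact h.isChain_right.mono fun r hr => (h.mem_left_or_mem_right r).resolve_left
      fun hrA => hinter (h.isUpperSet_left hr hrA) hqB

end IsHook

theorem isHook_prod {S T : Type} [LinearOrder S] [LinearOrder T] (x : S) (y : T) :
    IsHook (P := ↥({x} ×ˢ Set.Iic y ∪ Set.Iic x ×ˢ {y})) ⟨(x, y), .inl ⟨rfl, le_rfl⟩⟩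
      {q | q.1.1 = x} {q | q.1.2 = y} := by
  have hle : ∀ q ∈ {x} ×ˢ Set.Iic y ∪ Set.Iic x ×ˢ {y}, q.1 ≤ x ∧ q.2 ≤ y := by
    rintro q (⟨hq₁, hq₂⟩ | ⟨hq₁, hq₂⟩)
    · exact ⟨hq₁.le, hq₂⟩
    · exact ⟨hq₁, hq₂.le⟩
  exact
    { isTop := fun q => hle q q.2
      union_eq := Set.eq_univ_of_forall fun q => q.2.imp And.left And.right
      inter_eq := Set.ext fun q =>
        ⟨fun hq => ⟨hq.1.ge, hq.2.ge⟩,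
          fun hq => ⟨(hle q q.2).1.antisymm hq.1, (hle q q.2).2.antisymm hq.2⟩⟩
      isUpperSet_left := fun q r hqr hq => (hle r r.2).1.antisymm (hq.ge.trans hqr.1)
      isUpperSet_right := fun q r hqr hq => (hle r r.2).2.antisymm (hq.ge.trans hqr.2)
      isChain_left := fun q hq r hr _ => (le_total q.1.2 r.1.2).imp
        (fun h => ⟨(hq.trans hr.symm).le, h⟩) fun h => ⟨(hr.trans hq.symm).le, h⟩
      isChain_right := fun q hq r hr _ => (le_total q.1.1 r.1.1).imp
        (fun h => ⟨h, (hq.trans hr.symm).le⟩) fun h => ⟨h, (hr.trans hq.symm).le⟩ }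

end Hooks

end PMod

open PMod in
theorem stmt11_general {k : Type} [Field k] {P : Type} [Preorder P] {c : P} {A B : Set P}
    (h : IsHook c A B) (M : PersistenceModule k P) (hfd : ∀ p, FiniteDimensional k (M.V p))
    (hind : Indecomposable M) :
    ∃ (I : Set P) (hI : IsInterval I), Isomorphic M (intervalModule k I hI.2.1) := by
  by_cases hinj : ∀ p, Function.Injective (M.map (h.isTop p))
  · exact hind.exists_isomorphic_of_injective h.isTop h.union_eq h.corner_mem_left h.isChain_left
      h.isChain_right hinj
  · obtain ⟨p, hp⟩ := not_forall.1 hinj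
    exact hind.exists_isomorphic_of_not_injective h.isTop h.isChain_Ici
      (fun _ hq => h.isChain_Iic hq) hp

open PMod in
/-- Lemma 4.1: indecomposable pointwise finite-dimensional modules over a hook-shaped
subposet of a product of two totally ordered sets are interval modules. -/
theorem stmt11 {k : Type} [Field k] {S T : Type} [LinearOrder S] [LinearOrder T]
    (x : S) (y : T)
    (M : PersistenceModule k ↥(({x} : Set S) ×ˢ Set.Iic y ∪ Set.Iic x ×ˢ ({y} : Set T)))
    (hfd : ∀ p, FiniteDimensional k (M.V p)) (hind : Indecomposable M) :
    ∃ (I : Set ↥(({x} : Set S) ×ˢ Set.Iic y ∪ Set.Iic x ×ˢ ({y} : Set T)))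
      (hI : IsInterval I),
      Isomorphic M (intervalModule k I hI.2.1) :=
  stmt11_general (isHook_prod x y) M hfd hind
end

section
/- Let k be a field, S and T totally ordered sets, and M a pointwise finite-dimensional, middle exact persistence module over S × T. Fix s ∈ S and an interval J_T ⊆ T that has an upper bound in T \ J_T. Then every monomorphism h from k_{{s} × J_T} to the restriction of M to the vertical line {s} × T extends to a monomorphism from k_{(-∞, s] × J_T} to the restriction of M to (-∞, s] × T, where (-∞, s] = {s' ∈ S : s' ≤ s}, agreeing with h on {s} × J_T. -/
/-!
A morphism `k_I → N` is a family of vectors `x p ∈ N_p`, `p ∈ I`, transported to one another inside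
`I` and killed on leaving `I`. Let `v` be the family of `h` on the line over `s`. For `a ≤ s`,
`t ∈ J` and an upper bound `e ∉ J` of `J`, the vector `v t` dies at `(s, e)`, so middle exactness
of the rectangle `[a, s] × [t, e]` lifts it to `w ∈ M_(a, t)` dying at `(a, e)`. Pushed forward,
`w` is a correct family on the part of the band above `(a, t)`, except that it may survive at
points outside `J` not above `(a, e)`. As `(a, t, e)` decreases, each individual requirement is met
eventually. The lifts need not be compatible with one another: finite-dimensional spaces admit
generalized limits along a filter that are natural for linear maps and send an eventually constant
family to its value, so the limit of the pushed forward lifts meets all requirements at once.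
Injectivity is automatic, since the limit vector at `(a, t)` is transported to `v t ≠ 0`.
-/

namespace PMod

open Filter

section EventualLimit

variable {k D V W : Type*} [Field k] [AddCommGroup V] [Module k V] [FiniteDimensional k V]
  [AddCommGroup W] [Module k W] [FiniteDimensional k W] (l : Filter D) [l.NeBot]

variable (k) in
/-- A linear functional on germs of scalar functions along `l` that sends the constant germ `1` to
`1`; it plays the role of an ultrafilter limit. -/
noncomputable def germFunctional : Module.Dual k (Germ l k) :=
  (Module.Projective.exists_dual_eq_one k (one_ne_zero (α := Germ l k))).choose

theorem germFunctional_const (c : k) : germFunctional k l (fun _ : D => c : D → k) = c := by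
  have h_one : germFunctional k l 1 = 1 :=
    (Module.Projective.exists_dual_eq_one k (one_ne_zero (α := Germ l k))).choose_spec
  have h_const : ((fun _ : D => c : D → k) : Germ l k) = c • (1 : Germ l k) := by
    rw [← Germ.coe_one, ← Germ.coe_smul]
    congr 1
    ext
    simp
  rw [h_const, map_smul, h_one, smul_eq_mul, mul_one]

variable (k) in
/-- The generalized limit along `l` of a function with values in a finite-dimensional space `V`:
the vector on which every functional `φ` takes the value `germFunctional k l (φ ∘ f)`. It is
defined for every `f`, and equals `v` when `f` is eventually equal to `v`. -/
noncomputable def eventualLim (f : D → V) : V :=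
  (Module.evalEquiv k V).symm
    { toFun := fun φ => germFunctional k l (fun d => φ (f d) : D → k)
      map_add' := fun φ ψ => map_add (germFunctional k l) (↑fun d => φ (f d)) (↑fun d => ψ (f d))
      map_smul' := fun c φ => map_smul (germFunctional k l) c (↑fun d => φ (f d)) }

theorem dual_eventualLim (φ : Module.Dual k V) (f : D → V) :
    φ (eventualLim k l f) = germFunctional k l (fun d => φ (f d) : D → k) :=
  Module.apply_evalEquiv_symm_apply k V φ _

variable {l}

theorem eventualLim_congr {f g : D → V} (hfg : f =ᶠ[l] g) :
    eventualLim k l f = eventualLim k l g := by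
  refine (Module.evalEquiv k V).injective (LinearMap.ext fun φ => ?_)
  simp only [Module.evalEquiv_apply, Module.Dual.eval_apply, dual_eventualLim]
  exact congrArg _ (Germ.coe_eq.2 (hfg.fun_comp φ))

theorem eventualLim_eq_of_eventually {f : D → V} {v : V} (hf : ∀ᶠ d in l, f d = v) :
    eventualLim k l f = v := by
  rw [eventualLim_congr (g := fun _ => v) hf]
  refine (Module.evalEquiv k V).injective (LinearMap.ext fun φ => ?_)
  simp only [Module.evalEquiv_apply, Module.Dual.eval_apply, dual_eventualLim,
    germFunctional_const]

theorem map_eventualLim (A : V →ₗ[k] W) (f : D → V) :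
    A (eventualLim k l f) = eventualLim k l fun d => A (f d) := by
  refine (Module.evalEquiv k W).injective (LinearMap.ext fun φ => ?_)
  simp only [Module.evalEquiv_apply, Module.Dual.eval_apply, dual_eventualLim]
  exact dual_eventualLim l (φ ∘ₗ A) f

end EventualLimit

section IntervalSection

variable {k : Type} [Field k] {P : Type} [Preorder P] {N : PersistenceModule k P} {I : Set P}

theorem PersistenceModule.map_map_s12 (N : PersistenceModule k P) {p q r : P} (hpq : p ≤ q)
    (hqr : q ≤ r) (m : N.V p) : N.map hqr (N.map hpq m) = N.map (hpq.trans hqr) m :=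
  (LinearMap.congr_fun (N.map_trans hpq hqr) m).symm

theorem PersistenceModule.map_eq_zero_of_le (N : PersistenceModule k P) {p q r : P} {hpq : p ≤ q}
    (hqr : q ≤ r) {m : N.V p} (hm : N.map hpq m = 0) : N.map (hpq.trans hqr) m = 0 := by
  rw [← N.map_map_s12 hpq hqr, hm, map_zero]

/-- The families of vectors that correspond to morphisms `k_I → N`, namely the images of the
canonical generators, extended by zero outside `I`. -/
structure IsIntervalSection (N : PersistenceModule k P) (I : Set P) (x : ∀ p, N.V p) : Prop where
  eq_zero : ∀ p ∉ I, x p = 0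
  map_eq : ∀ ⦃p q⦄ (hpq : p ≤ q), p ∈ I → N.map hpq (x p) = x q

open Classical in
/-- The interval section of a morphism `k_I → N`. -/
noncomputable def Hom.toSection {hI : IsConvex I} (h : Hom (intervalModule k I hI) N) (p : P) :
    N.V p :=
  if hp : p ∈ I then h.app p (kGen k hp) else 0

theorem Hom.toSection_of_mem {hI : IsConvex I} (h : Hom (intervalModule k I hI) N) {p : P}
    (hp : p ∈ I) : h.toSection p = h.app p (kGen k hp) :=
  dif_pos hp

theorem intervalMap_kGen_of_mem {p q : P} (hpq : p ≤ q) (hp : p ∈ I) (hq : q ∈ I) :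
    intervalMap k I hpq (kGen k hp) = kGen k hq :=
  dif_pos hq

theorem intervalMap_of_notMem {p q : P} (hpq : p ≤ q) (hq : q ∉ I) (m : kMod k I p) :
    intervalMap k I hpq m = 0 :=
  dif_neg hq

theorem Hom.isIntervalSection_toSection {hI : IsConvex I} (h : Hom (intervalModule k I hI) N) :
    IsIntervalSection N I h.toSection where
  eq_zero _ hp := dif_neg hp
  map_eq p q hpq hp := by
    rw [h.toSection_of_mem hp]
    refine (LinearMap.congr_fun (h.natural hpq) (kGen k hp)).trans ?_
    by_cases hq : q ∈ I
    · rw [h.toSection_of_mem hq]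
      exact congrArg (h.app q) (intervalMap_kGen_of_mem hpq hp hq)
    · rw [Hom.toSection, dif_neg hq]
      exact (congrArg (h.app q) (intervalMap_of_notMem hpq hq _)).trans (map_zero _)

theorem Hom.toSection_ne_zero {hI : IsConvex I} (h : Hom (intervalModule k I hI) N) {p : P}
    (h_inj : Function.Injective (h.app p)) (hp : p ∈ I) : h.toSection p ≠ 0 := by
  rw [h.toSection_of_mem hp]
  intro h_zero
  have h_gen : kGen k hp = 0 := h_inj (h_zero.trans (map_zero _).symm)
  exact one_ne_zero (congrArg Subtype.val h_gen)

/-- The morphism `k_I → N` that sends the canonical generators to a given interval section. -/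
noncomputable def IsIntervalSection.toHom {x : ∀ p, N.V p} (hx : IsIntervalSection N I x)
    (hI : IsConvex I) : Hom (intervalModule k I hI) N where
  app p := LinearMap.toSpanSingleton k (N.V p) (x p) ∘ₗ (kMod k I p).subtype
  natural {p q} hpq := by
    refine LinearMap.ext fun (m : kMod k I p) => ?_
    change N.map hpq ((m : k) • x p) = (intervalMap k I hpq m : k) • x q
    rw [map_smul]
    by_cases hp : p ∈ I
    · rw [hx.map_eq hpq hp]
      by_cases hq : q ∈ I
      · rw [intervalMap, LinearMap.coe_mk, AddHom.coe_mk, dif_pos hq]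
      · rw [hx.eq_zero q hq, smul_zero, smul_zero]
    · have hm : m = 0 := Subtype.ext (kMod_coe_eq_zero k hp m)
      rw [hm, map_zero, Submodule.coe_zero, Submodule.coe_zero, zero_smul, zero_smul]

theorem IsIntervalSection.toHom_app_kGen {x : ∀ p, N.V p} (hx : IsIntervalSection N I x)
    (hI : IsConvex I) {p : P} (hp : p ∈ I) : (hx.toHom hI).app p (kGen k hp) = x p :=
  one_smul k (x p)

theorem IsIntervalSection.toHom_app_injective {x : ∀ p, N.V p} (hx : IsIntervalSection N I x)
    (hI : IsConvex I) (p : P) (h_ne : p ∈ I → x p ≠ 0) :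
    Function.Injective ((hx.toHom hI).app p) := by
  refine (injective_iff_map_eq_zero _).2 fun (m : kMod k I p) (hm : (m : k) • x p = 0) => ?_
  refine Subtype.ext ?_
  by_cases hp : p ∈ I
  · exact (smul_eq_zero.1 hm).resolve_right (h_ne hp)
  · exact kMod_coe_eq_zero k hp m

theorem isIntervalSection_eventualLim [∀ p, FiniteDimensional k (N.V p)] {D : Type*}
    {l : Filter D} [l.NeBot] {y : D → ∀ p, N.V p}
    (hy_zero : ∀ p ∉ I, ∀ᶠ d in l, y d p = 0)
    (hy_map : ∀ ⦃p q⦄ (hpq : p ≤ q), p ∈ I → ∀ᶠ d in l, N.map hpq (y d p) = y d q) :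
    IsIntervalSection N I fun p => eventualLim k l fun d => y d p where
  eq_zero p hp := eventualLim_eq_of_eventually (hy_zero p hp)
  map_eq _ _ hpq hp := (map_eventualLim _ _).trans (eventualLim_congr (hy_map hpq hp))

open Classical in
/-- The family obtained by pushing a vector `w ∈ N_a` forward to all points of `I` above `a`,
extended by zero. -/
noncomputable def pushforward (N : PersistenceModule k P) (I : Set P) {a : P} (w : N.V a) (p : P) :
    N.V p :=
  if h : a ≤ p ∧ p ∈ I then N.map h.1 w else 0

theorem pushforward_of_mem {a p : P} (w : N.V a) (hap : a ≤ p) (hp : p ∈ I) :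
    pushforward N I w p = N.map hap w :=
  dif_pos ⟨hap, hp⟩

theorem pushforward_of_notMem {a p : P} (w : N.V a) (hp : p ∉ I) : pushforward N I w p = 0 :=
  dif_neg fun h => hp h.2

theorem map_pushforward {a p q : P} (w : N.V a) (hap : a ≤ p) (hpq : p ≤ q) (hp : p ∈ I)
    (hw : q ∉ I → N.map (hap.trans hpq) w = 0) :
    N.map hpq (pushforward N I w p) = pushforward N I w q := by
  rw [pushforward_of_mem w hap hp, N.map_map_s12]
  by_cases hq : q ∈ I
  · rw [pushforward_of_mem w (hap.trans hpq) hq]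
  · rw [pushforward_of_notMem w hq, hw hq]

theorem exists_isIntervalSection_of_eventually [∀ p, FiniteDimensional k (N.V p)] {D : Type*}
    {l : Filter D} [l.NeBot] {a : D → P} (w : ∀ d, N.V (a d))
    (ha : ∀ p ∈ I, ∀ᶠ d in l, a d ≤ p)
    (hw : ∀ p ∈ I, ∀ q ∉ I, p ≤ q → ∀ᶠ d in l, ∀ h : a d ≤ q, N.map h (w d) = 0) :
    ∃ x, IsIntervalSection N I x ∧
      ∀ p ∈ I, ∀ v, (∀ᶠ d in l, ∀ h : a d ≤ p, N.map h (w d) = v) → x p = v := by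
  refine ⟨_, isIntervalSection_eventualLim (l := l) (y := fun d => pushforward N I (w d))
    (fun p hp => .of_forall fun d => pushforward_of_notMem (w d) hp) ?_, ?_⟩
  · intro p q hpq hp
    by_cases hq : q ∈ I
    · filter_upwards [ha p hp] with d hd
      exact map_pushforward (w d) hd hpq hp (absurd hq)
    · filter_upwards [ha p hp, hw p hp q hq hpq] with d hd hwd
      exact map_pushforward (w d) hd hpq hp fun _ => hwd _
  · intro p hp v hv
    refine eventualLim_eq_of_eventually ?_
    filter_upwards [ha p hp, hv] with d hd hvd
    rw [pushforward_of_mem (w d) hd hp, hvd]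

end IntervalSection

theorem IsConvex.mem_upperBounds {T : Type} [LinearOrder T] {J : Set T} (hJ : IsConvex J) {t e : T}
    (hte : t ≤ e) (ht : t ∈ J) (he : e ∉ J) : e ∈ upperBounds J :=
  fun t' ht' => le_of_not_ge fun het' => he (hJ t e t' hte het' ht ht')

section Band

variable {k : Type} [Field k] {S T : Type} [Preorder S]

theorem MiddleExact.exists_lift_map_eq_zero [Preorder T] {M : PersistenceModule k (S × T)}
    (hM : MiddleExact M) {a s : S} {t e : T} (has : a ≤ s) (hte : t ≤ e) (m : M.V (s, t))
    (hm : M.map (Prod.mk_le_mk.2 ⟨le_refl s, hte⟩) m = 0) :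
    ∃ w : M.V (a, t), M.map (Prod.mk_le_mk.2 ⟨has, le_refl t⟩) w = m ∧
      M.map (Prod.mk_le_mk.2 ⟨le_refl a, hte⟩) w = 0 := by
  obtain ⟨w, hw_zero, hw_lift⟩ := hM a s t e has hte 0 m (by rw [map_zero, hm])
  exact ⟨w, hw_lift, hw_zero⟩

/-- The rectangles `[a, s] × [t, e]` with `a ≤ s`, `t ∈ J` and `e ∉ J` an upper bound of `J`,
encoded as triples `(a, t, e)` with the product order, along which the extension is constructed. -/
abbrev Corner [Preorder T] (s : S) (J : Set T) : Type :=
  Set.Iic s × J × ↥(upperBounds J \ J)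

/-- The lower left corner `(a, t)` of the rectangle `[a, s] × [t, e]`. -/
abbrev Corner.base [Preorder T] {s : S} {J : Set T} (c : Corner s J) : ↥{p : S × T | p.1 ≤ s} :=
  ⟨(c.1, c.2.1), c.1.2⟩

variable [LinearOrder T] {M : PersistenceModule k (S × T)} {s : S} {J : Set T}

theorem Corner.atBot_neBot [IsCodirectedOrder (Set.Iic s)] (hJ : J.Nonempty)
    (hub : (upperBounds J \ J).Nonempty) : (atBot : Filter (Corner s J)).NeBot := by
  have : Nonempty J := hJ.to_subtype
  have : Nonempty ↥(upperBounds J \ J) := hub.to_subtype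
  simp only [← prod_atBot_atBot_eq]
  infer_instance

theorem Corner.eventually_base_le (hub : (upperBounds J \ J).Nonempty)
    {p : ↥{p : S × T | p.1 ≤ s}} (hp : p.1.2 ∈ J) :
    ∀ᶠ c : Corner s J in atBot, c.base ≤ p := by
  filter_upwards [eventually_le_atBot
    ((⟨p.1.1, p.2⟩, ⟨p.1.2, hp⟩, ⟨hub.some, hub.some_mem⟩) : Corner s J)] with c hc
  exact ⟨hc.1, hc.2.1⟩

theorem IsIntervalSection.exists_corner_lift
    {v : ∀ p, (restrict M {p : S × T | p.1 = s}).V p}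
    (hv : IsIntervalSection (restrict M {p | p.1 = s}) {p | p.1.2 ∈ J} v) (hM : MiddleExact M)
    (c : Corner s J) :
    ∃ w : M.V c.base.1,
      M.map (Prod.mk_le_mk.2 ⟨c.1.2, le_rfl⟩) w = v ⟨(s, c.2.1), rfl⟩ ∧
      M.map (Prod.mk_le_mk.2 ⟨le_rfl, c.2.2.2.1 c.2.1.2⟩ : c.base.1 ≤ (c.1.1, c.2.2.1)) w = 0 := by
  obtain ⟨⟨a, has⟩, ⟨t, ht⟩, ⟨e, he_ub, he⟩⟩ := c
  have hte : (⟨(s, t), rfl⟩ : ↥{p : S × T | p.1 = s}) ≤ ⟨(s, e), rfl⟩ := ⟨le_refl s, he_ub ht⟩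
  exact hM.exists_lift_map_eq_zero has (he_ub ht) (v ⟨(s, t), rfl⟩)
    ((hv.map_eq hte ht).trans (hv.eq_zero ⟨(s, e), rfl⟩ he))

theorem IsIntervalSection.exists_extension_Iic [IsCodirectedOrder (Set.Iic s)]
    [∀ p, FiniteDimensional k (M.V p)] {v : ∀ p, (restrict M {p : S × T | p.1 = s}).V p}
    (hv : IsIntervalSection (restrict M {p | p.1 = s}) {p | p.1.2 ∈ J} v) (hM : MiddleExact M)
    (hJ : IsIntervalLin J) (hub : (upperBounds J \ J).Nonempty) :
    ∃ x, IsIntervalSection (restrict M {p : S × T | p.1 ≤ s}) {p | p.1.2 ∈ J} x ∧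
      ∀ t ∈ J, x ⟨(s, t), le_refl s⟩ = v ⟨(s, t), rfl⟩ := by
  have : ∀ p, FiniteDimensional k ((restrict M {p : S × T | p.1 ≤ s}).V p) :=
    fun p => inferInstanceAs (FiniteDimensional k (M.V p.1))
  have := Corner.atBot_neBot (s := s) hJ.1 hub
  choose w hw_lift hw_zero using fun c : Corner s J => hv.exists_corner_lift hM c
  have hw_dies : ∀ p ∈ {p : ↥{p : S × T | p.1 ≤ s} | p.1.2 ∈ J}, ∀ q ∉ {q | q.1.2 ∈ J}, p ≤ q →
      ∀ᶠ c : Corner s J in atBot, ∀ hcq : c.base ≤ q, M.map hcq (w c) = 0 := by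
    intro p hp q hq hpq
    have hq_ub : q.1.2 ∈ upperBounds J := hJ.2.mem_upperBounds hpq.2 hp hq
    filter_upwards [eventually_le_atBot
      ((⟨q.1.1, q.2⟩, ⟨p.1.2, hp⟩, ⟨q.1.2, hq_ub, hq⟩) : Corner s J)] with c hc _
    have hcorner : (c.1.1, c.2.2.1) ≤ q.1 := ⟨hc.1, hc.2.2⟩
    exact M.map_eq_zero_of_le hcorner (hw_zero c)
  obtain ⟨x, hx, hx_eq⟩ := exists_isIntervalSection_of_eventually
    (N := restrict M {p : S × T | p.1 ≤ s}) w (fun _ hp => Corner.eventually_base_le hub hp) hw_dies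
  refine ⟨x, hx, fun t ht => hx_eq ⟨(s, t), le_refl s⟩ ht _ (.of_forall fun c hc => ?_)⟩
  have hct : (⟨(s, c.2.1), rfl⟩ : ↥{p : S × T | p.1 = s}) ≤ ⟨(s, t), rfl⟩ := ⟨le_refl s, hc.2⟩
  rw [← hv.map_eq hct c.2.1.2, ← hw_lift c]
  exact (M.map_map_s12 _ _ _).symm

theorem IsIntervalSection.ne_zero_of_extension
    {v : ∀ p, (restrict M {p : S × T | p.1 = s}).V p}
    {x : ∀ p, (restrict M {p : S × T | p.1 ≤ s}).V p}
    (hx : IsIntervalSection (restrict M {p : S × T | p.1 ≤ s}) {p | p.1.2 ∈ J} x)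
    (hxv : ∀ t ∈ J, x ⟨(s, t), le_refl s⟩ = v ⟨(s, t), rfl⟩) (hv : ∀ p, p.1.2 ∈ J → v p ≠ 0)
    (p : ↥{p : S × T | p.1 ≤ s}) (hp : p.1.2 ∈ J) : x p ≠ 0 := by
  intro hxp
  have hps : p ≤ ⟨(s, p.1.2), le_refl s⟩ := ⟨p.2, le_rfl⟩
  refine hv ⟨(s, p.1.2), rfl⟩ hp ?_
  rw [← hxv _ hp, ← hx.map_eq hps hp, hxp]
  exact map_zero _

end Band

end PMod

open PMod in
theorem stmt12_general {k : Type} [Field k] {S T : Type} [Preorder S] [LinearOrder T]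
    (M : PersistenceModule k (S × T)) (hfd : ∀ p, FiniteDimensional k (M.V p))
    (hme : MiddleExact M) (s : S) [IsCodirectedOrder (Set.Iic s)] (JT : Set T)
    (hJT : IsIntervalLin JT) (hub : ∃ ε, ε ∉ JT ∧ ∀ t ∈ JT, t ≤ ε)
    (h : Hom
      (intervalModule k {p : ↥{p : S × T | p.1 = s} | (p : S × T).2 ∈ JT}
        (hJT.2.preimageSnd {p : S × T | p.1 = s}))
      (restrict M {p : S × T | p.1 = s}))
    (hmono : ∀ p, Function.Injective (h.app p)) :
    ∃ H : Hom
      (intervalModule k {p : ↥{p : S × T | p.1 ≤ s} | (p : S × T).2 ∈ JT}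
        (hJT.2.preimageSnd {p : S × T | p.1 ≤ s}))
      (restrict M {p : S × T | p.1 ≤ s}),
      (∀ p, Function.Injective (H.app p)) ∧
      ∀ (t : T) (ht : t ∈ JT),
        H.app ⟨(s, t), le_refl s⟩
          (kGen k (show (⟨(s, t), le_refl s⟩ : ↥{p : S × T | p.1 ≤ s}) ∈
            {p : ↥{p : S × T | p.1 ≤ s} | (p : S × T).2 ∈ JT} from ht)) =
        h.app ⟨(s, t), rfl⟩
          (kGen k (show (⟨(s, t), rfl⟩ : ↥{p : S × T | p.1 = s}) ∈
            {p : ↥{p : S × T | p.1 = s} | (p : S × T).2 ∈ JT} from ht)) := by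
  obtain ⟨ε, hε, hε_ub⟩ := hub
  obtain ⟨x, hx, hxv⟩ :=
    h.isIntervalSection_toSection.exists_extension_Iic hme hJT ⟨ε, hε_ub, hε⟩
  have hx_ne := hx.ne_zero_of_extension hxv fun p hp => h.toSection_ne_zero (hmono p) hp
  refine ⟨hx.toHom _, fun p => hx.toHom_app_injective _ p (hx_ne p), fun t ht => ?_⟩
  rw [hx.toHom_app_kGen, hxv t ht]
  exact h.toSection_of_mem ht

open PMod in
/-- Lemma 4.2(1): extension of a monomorphism from an interval module on a vertical
segment to a monomorphism from an interval module on a horizontal band. -/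
theorem stmt12 {k : Type} [Field k] {S T : Type} [LinearOrder S] [LinearOrder T]
    (M : PersistenceModule k (S × T)) (hfd : ∀ p, FiniteDimensional k (M.V p))
    (hme : MiddleExact M) (s : S) (JT : Set T) (hJT : IsIntervalLin JT)
    (hub : ∃ ε, ε ∉ JT ∧ ∀ t ∈ JT, t ≤ ε)
    (h : Hom
      (intervalModule k {p : ↥{p : S × T | p.1 = s} | (p : S × T).2 ∈ JT}
        (hJT.2.preimageSnd {p : S × T | p.1 = s}))
      (restrict M {p : S × T | p.1 = s}))
    (hmono : ∀ p, Function.Injective (h.app p)) :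
    ∃ H : Hom
      (intervalModule k {p : ↥{p : S × T | p.1 ≤ s} | (p : S × T).2 ∈ JT}
        (hJT.2.preimageSnd {p : S × T | p.1 ≤ s}))
      (restrict M {p : S × T | p.1 ≤ s}),
      (∀ p, Function.Injective (H.app p)) ∧
      ∀ (t : T) (ht : t ∈ JT),
        H.app ⟨(s, t), le_refl s⟩
          (kGen k (show (⟨(s, t), le_refl s⟩ : ↥{p : S × T | p.1 ≤ s}) ∈
            {p : ↥{p : S × T | p.1 ≤ s} | (p : S × T).2 ∈ JT} from ht)) =
        h.app ⟨(s, t), rfl⟩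
          (kGen k (show (⟨(s, t), rfl⟩ : ↥{p : S × T | p.1 = s}) ∈
            {p : ↥{p : S × T | p.1 = s} | (p : S × T).2 ∈ JT} from ht)) := by
  exact stmt12_general M hfd hme s JT hJT hub h hmono
end
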